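/- arXiv:2104.13222 — 2 statements merged into one kernel-verified Lean document; each statement's English description precedes it below -/
import Mathlib

section
/- Let H be the windmill graph Wd(3,3) (three triangles sharing exactly one common vertex p) and let the bowtie be the graph consisting of two triangles sharing exactly one common vertex v. For every finite H-free graph A there exists a finite H-free graph E containing A as an induced subgraph such that for every vertex a of A there is an injective graph homomorphism j from the bowtie into E with j(v) = a. -/
/-!
Let `ν a` be the largest number of triangles of `A` through `a` that pairwise share only `a`, so
`ν a ≤ n` when `A` contains no windmill with `n + 1` blades. Glue `n - ν a` new triangles to each
vertex `a`. A windmill centered at `a` then has at most `ν a` blades in `A` and at most `n - ν a`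
new ones, and both bounds are attained simultaneously; a new vertex lies in a single triangle.
-/

open SimpleGraph

/-- `A` is contained in `G`: there is an injective graph homomorphism from `A` to `G`. -/
def Contains {V W : Type} (A : SimpleGraph V) (G : SimpleGraph W) : Prop :=
  ∃ f : A →g G, Function.Injective f

/-- The windmill graph `Wd(3,3)`: three triangles sharing the common vertex `0`,
with triangles `{0,1,2}`, `{0,3,4}`, `{0,5,6}`. -/
def windmill : SimpleGraph (Fin 7) :=
  SimpleGraph.fromRel fun a b =>
    a = 0 ∨ (a = 1 ∧ b = 2) ∨ (a = 3 ∧ b = 4) ∨ (a = 5 ∧ b = 6)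

/-- The bowtie graph: two triangles sharing the common vertex `0`,
with triangles `{0,1,2}` and `{0,3,4}`. -/
def bowtie : SimpleGraph (Fin 5) :=
  SimpleGraph.fromRel fun a b =>
    a = 0 ∨ (a = 1 ∧ b = 2) ∨ (a = 3 ∧ b = 4)

universe u

variable {V ι κ : Type*}

/-- The windmill graph `Wd(3, |ι|)`: triangles indexed by `ι` sharing the common vertex `none`.
The blade of index `i` consists of `none` and of the two vertices `some (i, s)`. -/
def windmillGraph (ι : Type*) : SimpleGraph (Option (ι × Bool)) where
  Adj x y := x ≠ y ∧ ∀ u ∈ x, ∀ v ∈ y, u.1 = v.1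
  symm := ⟨fun _ _ h => ⟨h.1.symm, fun u hu v hv => (h.2 v hv u hu).symm⟩⟩
  loopless := ⟨fun _ h => h.1 rfl⟩

/-- `p` is the center of a windmill in `G` whose blades are indexed by `ι`. -/
def IsWindmillCenter (G : SimpleGraph V) (ι : Type*) (p : V) : Prop :=
  ∃ φ : Copy (windmillGraph ι) G, φ none = p

theorem windmillGraph_free_iff {G : SimpleGraph V} :
    (windmillGraph ι).Free G ↔ ∀ p, ¬ IsWindmillCenter G ι p :=
  ⟨fun h _ ⟨φ, _⟩ => h ⟨φ⟩, fun h ⟨φ⟩ => h _ ⟨φ, rfl⟩⟩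

theorem isWindmillCenter_iff_exists_blades {G : SimpleGraph V} {p : V} :
    IsWindmillCenter G ι p ↔ ∃ f : ι × Bool → V, Function.Injective f ∧
      (∀ x, G.Adj p (f x)) ∧ ∀ i, G.Adj (f (i, false)) (f (i, true)) := by
  constructor
  · rintro ⟨φ, rfl⟩
    exact ⟨fun x => φ (some x), φ.injective.comp (Option.some_injective _),
      fun x => φ.toHom.map_adj (by simp [windmillGraph]),
      fun i => φ.toHom.map_adj (by simp [windmillGraph])⟩
  · rintro ⟨f, hf, hp, hblade⟩
    refine ⟨⟨⟨fun x => x.elim p f, ?_⟩, ?_⟩, rfl⟩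
    · rintro (_ | ⟨i, s⟩) (_ | ⟨j, t⟩) ⟨hne, hij⟩
      · exact absurd rfl hne
      · exact hp _
      · exact (hp _).symm
      · obtain rfl : i = j := hij _ rfl _ rfl
        cases s <;> cases t
        · exact absurd rfl hne
        · exact hblade i
        · exact (hblade i).symm
        · exact absurd rfl hne
    · rintro (_ | x) (_ | y) hxy
      · rfl
      · exact absurd hxy (hp y).ne
      · exact absurd hxy (hp x).ne'
      · exact congrArg some (hf hxy)

namespace IsWindmillCenter

variable {G : SimpleGraph V} {p : V}

theorem of_embedding (e : ι ↪ κ) (h : IsWindmillCenter G κ p) : IsWindmillCenter G ι p := by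
  obtain ⟨f, hf, hp, hblade⟩ := isWindmillCenter_iff_exists_blades.1 h
  exact isWindmillCenter_iff_exists_blades.2 ⟨f ∘ Prod.map e id,
    hf.comp (e.injective.prodMap Function.injective_id), fun _ => hp _, fun _ => hblade _⟩

theorem of_card_le [Finite ι] [Finite κ] (hcard : Nat.card ι ≤ Nat.card κ)
    (h : IsWindmillCenter G κ p) : IsWindmillCenter G ι p := by
  have := Fintype.ofFinite ι
  have := Fintype.ofFinite κ
  simp only [Nat.card_eq_fintype_card] at hcard
  exact h.of_embedding (Function.Embedding.nonempty_of_card_le hcard).some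

theorem of_isEmpty [IsEmpty ι] : IsWindmillCenter G ι p :=
  isWindmillCenter_iff_exists_blades.2 ⟨isEmptyElim, Function.injective_of_subsingleton _,
    isEmptyElim, isEmptyElim⟩

theorem exists_maximal {n : ℕ} (h : ¬ IsWindmillCenter G (Fin (n + 1)) p) :
    ∃ m ≤ n, IsWindmillCenter G (Fin m) p ∧ ¬ IsWindmillCenter G (Fin (m + 1)) p := by
  induction n with
  | zero => exact ⟨0, le_rfl, of_isEmpty, h⟩
  | succ n ih =>
    by_cases hn : IsWindmillCenter G (Fin (n + 1)) p
    · exact ⟨n + 1, le_rfl, hn, h⟩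
    · obtain ⟨m, hm, hmax⟩ := ih hn
      exact ⟨m, hm.trans n.le_succ, hmax⟩

end IsWindmillCenter

/-- The graph obtained from `A` by gluing, for each `k : κ`, a new triangle to the vertex
`base k`; the new vertices of this triangle are `inr (k, false)` and `inr (k, true)`. -/
def attachTriangles (A : SimpleGraph V) (base : κ → V) : SimpleGraph (V ⊕ κ × Bool) where
  Adj
    | .inl a, .inl b => A.Adj a b
    | .inl a, .inr x => base x.1 = a
    | .inr x, .inl a => base x.1 = a
    | .inr x, .inr y => x.1 = y.1 ∧ x.2 ≠ y.2
  symm := ⟨by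
    rintro (a | x) (b | y) h
    exacts [h.symm, h, h, ⟨h.1.symm, h.2.symm⟩]⟩
  loopless := ⟨by
    rintro (a | x) h
    exacts [h.ne rfl, h.2 rfl]⟩

namespace attachTriangles

variable (A : SimpleGraph V) (base : κ → V)

/-- `A` is an induced subgraph of `attachTriangles A base`. -/
def inlEmbedding : A ↪g attachTriangles A base := ⟨.inl, Iff.rfl⟩

variable {A base}

theorem eq_inl_or_eq_inr_of_triangle_inl {a : V} {x y : V ⊕ κ × Bool}
    (hx : (attachTriangles A base).Adj (.inl a) x) (hy : (attachTriangles A base).Adj (.inl a) y)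
    (hxy : (attachTriangles A base).Adj x y) :
    (∃ b c, x = .inl b ∧ y = .inl c) ∨
      ∃ k s, base k = a ∧ x = .inr (k, s) ∧ y = .inr (k, !s) := by
  rcases x with b | ⟨k, s⟩ <;> rcases y with c | ⟨l, t⟩
  · exact .inl ⟨b, c, rfl, rfl⟩
  · exact absurd (Eq.trans (Eq.symm hy) hxy) (A.ne_of_adj hx)
  · exact absurd (Eq.trans (Eq.symm hx) hxy) (A.ne_of_adj hy)
  · obtain ⟨rfl, hst⟩ : k = l ∧ s ≠ t := hxy
    exact .inr ⟨k, s, hx, rfl, by rw [Bool.eq_not.2 hst.symm]⟩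

theorem eq_inl_base_of_triangle_inr {z : κ × Bool} {x y : V ⊕ κ × Bool}
    (hx : (attachTriangles A base).Adj (.inr z) x) (hy : (attachTriangles A base).Adj (.inr z) y)
    (hxy : (attachTriangles A base).Adj x y) : x = .inl (base z.1) ∨ y = .inl (base z.1) := by
  rcases x with b | u <;> rcases y with c | v
  · exact .inl (congrArg _ (Eq.symm hx))
  · exact .inl (congrArg _ (Eq.symm hx))
  · exact .inr (congrArg _ (Eq.symm hy))
  · exact absurd ((Bool.eq_not.2 hx.2.symm).trans (Bool.eq_not.2 hy.2.symm).symm) hxy.2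

theorem subsingleton_of_isWindmillCenter_inr {z : κ × Bool}
    (h : IsWindmillCenter (attachTriangles A base) ι (.inr z)) : Subsingleton ι := by
  obtain ⟨f, hf, hp, hblade⟩ := isWindmillCenter_iff_exists_blades.1 h
  have base_mem_blade (i : ι) : ∃ s, f (i, s) = .inl (base z.1) :=
    (eq_inl_base_of_triangle_inr (hp _) (hp _) (hblade i)).elim (⟨_, ·⟩) (⟨_, ·⟩)
  refine ⟨fun i j => ?_⟩
  obtain ⟨s, hs⟩ := base_mem_blade i
  obtain ⟨t, ht⟩ := base_mem_blade j
  exact congrArg Prod.fst (hf (hs.trans ht.symm))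

theorem isWindmillCenter_inl_sum {a : V} (h : IsWindmillCenter A ι a) :
    IsWindmillCenter (attachTriangles A base) (ι ⊕ {k // base k = a}) (.inl a) := by
  obtain ⟨f, hf, hp, hblade⟩ := isWindmillCenter_iff_exists_blades.1 h
  let g : (ι ⊕ {k // base k = a}) × Bool → V ⊕ κ × Bool
    | (.inl i, s) => .inl (f (i, s))
    | (.inr k, s) => .inr (k, s)
  refine isWindmillCenter_iff_exists_blades.2 ⟨g, ?_, ?_, ?_⟩
  · rintro ⟨i | k, s⟩ ⟨j | l, t⟩ hg
    · simpa using hf (Sum.inl_injective hg)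
    · exact absurd hg Sum.inl_ne_inr
    · exact absurd hg Sum.inr_ne_inl
    · simpa [Subtype.ext_iff] using Sum.inr_injective hg
  · rintro ⟨i | k, s⟩
    exacts [hp _, k.2]
  · rintro (i | k)
    exacts [hblade i, ⟨rfl, Bool.false_ne_true⟩]

theorem exists_old_blades_of_isWindmillCenter_inl {a : V}
    (h : IsWindmillCenter (attachTriangles A base) ι (.inl a)) :
    ∃ S : Set ι, IsWindmillCenter A S a ∧ Nonempty (↥Sᶜ ↪ {k // base k = a}) := by
  obtain ⟨f, hf, hp, hblade⟩ := isWindmillCenter_iff_exists_blades.1 h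
  let S : Set ι := {i | ∀ s, ∃ b, f (i, s) = .inl b}
  have new_blade (i : ↥Sᶜ) :
      ∃ k s, base k = a ∧ f (i, false) = .inr (k, s) ∧ f (i, true) = .inr (k, !s) := by
    refine (eq_inl_or_eq_inr_of_triangle_inl (hp _) (hp _) (hblade i)).resolve_left
      fun ⟨b, c, hb, hc⟩ => i.2 ?_
    rintro (_ | _)
    exacts [⟨b, hb⟩, ⟨c, hc⟩]
  have old_vertex (x : S × Bool) : ∃ b, f (x.1, x.2) = .inl b := x.1.2 x.2
  choose g hg using old_vertex
  choose k s hbase hfalse htrue using new_blade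
  refine ⟨S, isWindmillCenter_iff_exists_blades.2 ⟨g, fun x y hxy => ?_, fun x => ?_, fun i => ?_⟩,
    ⟨fun i => ⟨k i, hbase i⟩, fun i j hij => ?_⟩⟩
  · have := hf ((hg x).trans ((congrArg _ hxy).trans (hg y).symm))
    simpa [Prod.ext_iff, Subtype.ext_iff] using this
  · have := hp (x.1, x.2)
    rwa [hg] at this
  · have := hblade i
    rwa [hg (i, false), hg (i, true)] at this
  · -- Two blades in the same new triangle have a vertex other than `a` in common.
    have hk : k i = k j := congrArg Subtype.val hij
    refine Subtype.ext ?_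
    by_cases hs : s i = s j
    · exact congrArg Prod.fst (hf ((hfalse i).trans (by rw [hk, hs, hfalse j])))
    · exact congrArg Prod.fst (hf ((hfalse i).trans (by rw [hk, Bool.eq_not.2 hs, htrue j])))

theorem isWindmillCenter_inl {a : V} [Finite {k // base k = a}] {m n : ℕ}
    (hm : IsWindmillCenter A (Fin m) a) (hn : n ≤ m + Nat.card {k // base k = a}) :
    IsWindmillCenter (attachTriangles A base) (Fin n) (.inl a) :=
  (isWindmillCenter_inl_sum hm).of_card_le (by simpa [Nat.card_sum] using hn)

theorem not_isWindmillCenter_inl {a : V} [Finite {k // base k = a}] {m n : ℕ}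
    (hm : ¬ IsWindmillCenter A (Fin (m + 1)) a) (hn : m + Nat.card {k // base k = a} ≤ n) :
    ¬ IsWindmillCenter (attachTriangles A base) (Fin (n + 1)) (.inl a) := by
  intro h
  obtain ⟨S, hS, ⟨e⟩⟩ := exists_old_blades_of_isWindmillCenter_inl h
  have old_card : Nat.card S ≤ m := by
    by_contra! hlt
    exact hm (hS.of_card_le (by simpa using hlt))
  have new_card : Nat.card ↥Sᶜ ≤ Nat.card {k // base k = a} := Finite.card_le_of_embedding e
  have total_card : Nat.card S + Nat.card ↥Sᶜ = n + 1 := by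
    simpa using S.ncard_add_ncard_compl
  omega

end attachTriangles

/-- The numbering of the vertices of a windmill used in `bowtie` and `windmill`: the center is `0`
and the blade of index `i` is `{0, 2 * i + 1, 2 * i + 2}`. -/
def windmillVertexEquiv (n : ℕ) : Option (Fin n × Bool) ≃ Fin (n * 2 + 1) :=
  (Equiv.optionCongr (((Equiv.refl _).prodCongr finTwoEquiv.symm).trans finProdFinEquiv)).trans
    (finSuccEquiv _).symm

/-- The bowtie is the windmill with two blades. -/
def bowtieIso : windmillGraph (Fin 2) ≃g bowtie where
  toEquiv := windmillVertexEquiv 2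
  map_rel_iff' := by
    unfold bowtie windmillGraph
    decide

/-- The graph `windmill` is the windmill with three blades. -/
def windmillIso : windmillGraph (Fin 3) ≃g windmill where
  toEquiv := windmillVertexEquiv 3
  map_rel_iff' := by
    unfold windmill windmillGraph
    decide

theorem contains_iff_isContained {V W : Type} {A : SimpleGraph V} {G : SimpleGraph W} :
    Contains A G ↔ A ⊑ G :=
  ⟨fun ⟨f, hf⟩ => ⟨f.toCopy hf⟩, fun ⟨φ⟩ => ⟨φ.toHom, φ.injective⟩⟩

theorem not_contains_windmill_iff {V : Type} {G : SimpleGraph V} :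
    ¬ Contains windmill G ↔ (windmillGraph (Fin 3)).Free G :=
  contains_iff_isContained.not.trans (free_congr windmillIso .refl).symm

theorem IsWindmillCenter.exists_bowtie_hom {V : Type} {G : SimpleGraph V} {p : V}
    (h : IsWindmillCenter G (Fin 2) p) :
    ∃ j : bowtie →g G, Function.Injective j ∧ j 0 = p := by
  obtain ⟨φ, rfl⟩ := h
  let j := φ.comp bowtieIso.symm.toCopy
  exact ⟨j.toHom, j.injective, rfl⟩

theorem exists_bowtie_extension_general {V : Type u} (A : SimpleGraph V) (n : ℕ)
    (hA : (windmillGraph (Fin (n + 1))).Free A) :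
    ∃ (W : Type u) (E : SimpleGraph W) (i : A ↪g E), (Finite V → Finite W) ∧
      (windmillGraph (Fin (n + 1))).Free E ∧ ∀ a, IsWindmillCenter E (Fin n) (i a) := by
  choose m hmn hm hmax using fun a =>
    IsWindmillCenter.exists_maximal (windmillGraph_free_iff.1 hA a)
  let base : (Σ a, Fin (n - m a)) → V := Sigma.fst
  let fiberEquiv (a : V) : {k // base k = a} ≃ Fin (n - m a) := Equiv.sigmaSubtype a
  have fiber_finite (a : V) : Finite {k // base k = a} := .of_equiv _ (fiberEquiv a).symm
  have fiber_card (a : V) : m a + Nat.card {k // base k = a} = n := by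
    simpa [Nat.card_congr (fiberEquiv a)] using Nat.add_sub_of_le (hmn a)
  refine ⟨_, attachTriangles A base, attachTriangles.inlEmbedding A base, fun _ => inferInstance,
    windmillGraph_free_iff.2 ?_, fun a => ?_⟩
  · rintro (a | ⟨k, s⟩) h
    · exact attachTriangles.not_isWindmillCenter_inl (hmax a) (fiber_card a).le h
    · have blade_unique := attachTriangles.subsingleton_of_isWindmillCenter_inr h
      have n_pos : 0 < n := k.2.pos.trans_le (Nat.sub_le _ _)
      exact absurd (Fin.subsingleton_iff_le_one.1 blade_unique) (by omega)
  · exact attachTriangles.isWindmillCenter_inl (hm a) (fiber_card a).ge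

/-- Every finite windmill-free graph `A` extends (as an induced subgraph, via a graph
embedding `i`) to a finite windmill-free graph `E` in which every vertex of (the image of)
`A` is the center of a bowtie. -/
theorem exists_bowtie_extension (α : Type) [Fintype α] (A : SimpleGraph α)
    (hA : ¬ Contains windmill A) :
    ∃ (β : Type) (_ : Fintype β) (E : SimpleGraph β) (i : A ↪g E),
      (¬ Contains windmill E) ∧
      ∀ a : α, ∃ j : bowtie →g E, Function.Injective j ∧ j 0 = i a := by
  obtain ⟨β, E, i, hβ, hE, hi⟩ :=
    exists_bowtie_extension_general A 2 (not_contains_windmill_iff.1 hA)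
  have := hβ inferInstance
  exact ⟨β, .ofFinite β, E, i, not_contains_windmill_iff.2 hE, fun a => (hi a).exists_bowtie_hom⟩
end

section
/- Fix n ≥ 3 and let F = {C_m : m ≥ n} be the family of all cycles of length at least n. The class K(F) of all finite graphs containing no cycle of length at least n (equivalently, admitting no injective graph homomorphism from any C_m with m ≥ n) has the weak amalgamation property. -/
open SimpleGraph

/-- The class of finite graphs satisfying `P` has the weak amalgamation property (WAP):
for every finite `A` with `P A` there are a finite `A'` with `P A'` and a graph embedding
`i : A ↪g A'` such that any two finite extensions `B`, `C` of `A'` in the class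
amalgamate over (the image of) `A`. -/
def GraphWAP (P : ∀ α : Type, SimpleGraph α → Prop) : Prop :=
  ∀ (α : Type) [Fintype α], ∀ A : SimpleGraph α, P α A →
    ∃ (β : Type) (_ : Fintype β) (A' : SimpleGraph β) (i : A ↪g A'), P β A' ∧
      ∀ (γ : Type) [Fintype γ], ∀ B : SimpleGraph γ, P γ B →
        ∀ (δ : Type) [Fintype δ], ∀ C : SimpleGraph δ, P δ C →
          ∀ (f : A' ↪g B) (g : A' ↪g C),
            ∃ (ε : Type) (_ : Fintype ε) (D : SimpleGraph ε), P ε D ∧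
              ∃ (f' : B ↪g D) (g' : C ↪g D),
                ∀ a : α, f' (f (i a)) = g' (g (i a))

/-!
Joining one vertex of each component to a new vertex creates no cycle, so `A` may be assumed
connected. Let `A'` be a largest graph without long cycles that arises from `A` by successively
adding ears (paths between two old vertices), where an ear with given ends and given length is
added at most `n ^ 2 + 2` times. There is a largest one: the level of an ear, one more than
the larger level of its ends, is bounded, because every vertex outside `A` lies on a path between
vertices of `A` that is longer than its level, while a path between vertices of a connected subgraph
`T` has length at most `n * |T|`, its segments between consecutive visits to `T` being shorter than
`n`.
By maximality, `A'` already has `n ^ 2 + 2` internally disjoint copies of every ear of `A'` in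
every long-cycle-free extension of `A'`.

It follows that the free amalgam of two extensions `B`, `C` over `A'` has no long cycle. Outside
`B`, a cycle that lies neither in `B` nor in `C` contains an ear of `A'` in `C`. The rest of the
cycle avoids the interior of one of the copies of this ear, since otherwise it would be a path of
length greater than `n ^ 2` between the ends of a copy. So the cycle is no longer than one with
fewer vertices outside `B`.
-/

section Walks

variable {V W : Type*} {G : SimpleGraph V} {H : SimpleGraph W} {u v w : V}

theorem exists_walk_map_copy_eq (φ : G ↪g H) {a b : V} {x y : W} (hx : φ.toHom a = x)
    (hy : φ.toHom b = y) (q : H.Walk x y) (hq : ∀ z ∈ q.support, z ∈ Set.range φ) :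
    ∃ p : G.Walk a b, (p.map φ.toHom).copy hx hy = q := by
  induction q generalizing a with
  | nil =>
    obtain rfl := φ.injective (hx.trans hy.symm)
    subst hx
    exact ⟨.nil, rfl⟩
  | cons h q ih =>
    obtain ⟨a', rfl⟩ := hq _ (List.mem_cons_of_mem _ q.start_mem_support)
    subst hx hy
    obtain ⟨p, rfl⟩ := ih rfl rfl fun z hz ↦ hq z (List.mem_cons_of_mem _ hz)
    exact ⟨.cons (φ.map_adj_iff.1 h) p, rfl⟩

theorem exists_walk_map_eq (φ : G ↪g H) {a b : V} (q : H.Walk (φ a) (φ b))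
    (hq : ∀ x ∈ q.support, x ∈ Set.range φ) : ∃ p : G.Walk a b, p.map φ.toHom = q :=
  exists_walk_map_copy_eq φ rfl rfl q hq

/-- `φ` with its codomain restricted to an induced subgraph containing its image. -/
def codRestrictInduce (φ : G ↪g H) (X : Set W) (hX : ∀ v, φ v ∈ X) : G ↪g H.induce X where
  toFun v := ⟨φ v, hX v⟩
  inj' _ _ h := φ.injective (congrArg Subtype.val h)
  map_rel_iff' := φ.map_adj_iff

theorem isPath_induce {X : Set V} {p : G.Walk u v} (hX : ∀ x ∈ p.support, x ∈ X)
    (hp : p.IsPath) : (p.induce X hX).IsPath :=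
  .of_map (f := (Embedding.induce X).toHom) (by rwa [Walk.map_induce])

theorem length_induce {X : Set V} (p : G.Walk u v) (hX : ∀ x ∈ p.support, x ∈ X) :
    (p.induce X hX).length = p.length := by
  have := congrArg List.length (p.support_induce hX)
  rwa [List.length_attachWith, Walk.length_support, Walk.length_support, add_left_inj] at this

theorem exists_append_first_mem {T : Set V} (p : G.Walk u v) (hp : ∃ x ∈ p.support, x ∈ T) :
    ∃ w ∈ T, ∃ (q : G.Walk u w) (r : G.Walk w v),
      p = q.append r ∧ ∀ x ∈ q.support, x ∈ T → x = w := by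
  induction p with
  | @nil a => exact ⟨a, by simpa using hp, .nil, .nil, rfl, by simp⟩
  | @cons a _ _ h p ih =>
    by_cases ha : a ∈ T
    · exact ⟨a, ha, .nil, .cons h p, rfl, by simp⟩
    · obtain ⟨w, hw, q, r, rfl, hq⟩ := ih (by simpa [ha] using hp)
      refine ⟨w, hw, .cons h q, r, rfl, fun x hx hxT ↦ ?_⟩
      obtain rfl | hx := List.mem_cons.1 hx
      · exact absurd hxT ha
      · exact hq x hx hxT

theorem isPath_append_iff {p : G.Walk u v} {q : G.Walk v w} :
    (p.append q).IsPath ↔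
      p.IsPath ∧ q.IsPath ∧ ∀ x ∈ p.support, x ∈ q.support → x = v := by
  refine ⟨fun h ↦ ⟨h.of_append_left, h.of_append_right, fun x hp hq ↦ by_contra fun hx ↦
    h.ne_of_mem_support_of_append hx hp hq rfl⟩, fun ⟨hp, hq, h⟩ ↦ ?_⟩
  have hv : v ∉ q.support.tail := by
    have := hq.support_nodup
    rw [← q.cons_tail_support] at this
    exact (List.nodup_cons.1 this).1
  rw [Walk.isPath_def, Walk.support_append, List.nodup_append']
  exact ⟨hp.support_nodup, hq.support_nodup.tail,
    fun x hxp hxq ↦ hv (h x hxp (List.mem_of_mem_tail hxq) ▸ hxq)⟩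

theorem isCycle_append_of_internally_disjoint {p : G.Walk u v} {q : G.Walk v u}
    (hp : p.IsPath) (hq : q.IsPath) (hpq : ∀ x ∈ p.support, x ∈ q.support → x = u ∨ x = v)
    (hl : 1 < p.length) : (p.append q).IsCycle := by
  refine hp.isCycle_append hq (fun x hxp hxq ↦ ?_) (.inl hl)
  have hu := hp.support_nodup
  have hv := hq.support_nodup
  rw [← Walk.cons_tail_support, List.nodup_cons] at hu hv
  obtain rfl | rfl := hpq x (List.mem_of_mem_tail hxp) (List.mem_of_mem_tail hxq)
  exacts [hu.1 hxp, hv.1 hxq]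

theorem isCycle_append_comm {p : G.Walk u v} {q : G.Walk v u} (h : (p.append q).IsCycle) :
    (q.append p).IsCycle := by
  rw [Walk.isCycle_def, Walk.isTrail_def, Walk.edges_append, Walk.tail_support_append] at h ⊢
  refine ⟨List.perm_append_comm.nodup_iff.1 h.1, fun hnil ↦ h.2.1 ?_,
    List.perm_append_comm.nodup_iff.1 h.2.2⟩
  rw [Walk.eq_nil_iff_nil, Walk.nil_append_iff] at hnil ⊢
  exact hnil.symm

theorem one_lt_length_of_mem_support {p : G.Walk u v} (hw : w ∈ p.support) (hwu : w ≠ u)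
    (hwv : w ≠ v) : 1 < p.length := by
  match p with
  | .nil => simp_all
  | .cons _ .nil => simp_all
  | .cons _ (.cons _ _) => simp

theorem exists_isPath_of_preconnected_induce {T : Set V} (hT : (G.induce T).Preconnected)
    {a b : V} (ha : a ∈ T) (hb : b ∈ T) :
    ∃ p : G.Walk a b, p.IsPath ∧ ∀ x ∈ p.support, x ∈ T := by
  obtain ⟨p, hp⟩ := (hT ⟨a, ha⟩ ⟨b, hb⟩).exists_isPath
  refine ⟨p.map (Embedding.induce (G := G) T).toHom,
    hp.map Subtype.val_injective, fun x hx ↦ ?_⟩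
  obtain ⟨y, -, rfl⟩ := List.mem_map.1 (Walk.support_map _ p ▸ hx)
  exact y.2

end Walks

section LongCycles

variable {V W : Type*} {G : SimpleGraph V} {H : SimpleGraph W} {n : ℕ}

/-- The class `K(F)` for `F = {C_m : m ≥ n}`, phrased with closed walks: every cycle of `G` is
shorter than `n`. -/
def LongCycleFree (n : ℕ) (G : SimpleGraph V) : Prop :=
  ∀ ⦃u : V⦄ (c : G.Walk u u), c.IsCycle → c.length < n

theorem longCycleFree_iff_not_contains {V : Type} {G : SimpleGraph V} (hn : 3 ≤ n) :
    LongCycleFree n G ↔ ∀ m, n ≤ m → ¬ Contains (cycleGraph m) G := by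
  have contains_iff {m : ℕ} (hm : n ≤ m) :
      Contains (cycleGraph m) G ↔ ∃ (u : V) (c : G.Walk u u), c.IsCycle ∧ c.length = m := by
    rw [← cycleGraph_isContained_iff (by lia)]
    exact ⟨fun ⟨f, hf⟩ ↦ ⟨⟨f, hf⟩⟩, fun ⟨f⟩ ↦ ⟨f.toHom, f.injective⟩⟩
  refine ⟨fun h m hm hm' ↦ ?_, fun h u c hc ↦ not_le.1 fun hlen ↦
    h _ hlen ((contains_iff hlen).2 ⟨u, c, hc, rfl⟩)⟩
  obtain ⟨u, c, hc, rfl⟩ := (contains_iff hm).1 hm'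
  exact (h c hc).not_ge hm

theorem LongCycleFree.comap (φ : G ↪g H) (hH : LongCycleFree n H) : LongCycleFree n G :=
  fun _ c hc ↦ by
    simpa using hH (c.map φ.toHom) (hc.map φ.injective)

theorem LongCycleFree.length_lt_of_support_subset_range (φ : G ↪g H) (hG : LongCycleFree n G)
    {u : W} {c : H.Walk u u} (hc : c.IsCycle) (hcφ : ∀ x ∈ c.support, x ∈ Set.range φ) :
    c.length < n := by
  obtain ⟨a, rfl⟩ := hcφ u c.start_mem_support
  obtain ⟨p, rfl⟩ := exists_walk_map_eq φ c hcφ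
  simpa using hG p ((Walk.isCycle_map_iff_of_injective φ.injective).1 hc)

theorem longCycleFree_induce_iff {X : Set V} :
    LongCycleFree n (G.induce X) ↔ ∀ ⦃u : V⦄ (c : G.Walk u u), c.IsCycle →
      (∀ x ∈ c.support, x ∈ X) → c.length < n := by
  refine ⟨fun h u c hc hcX ↦ h.length_lt_of_support_subset_range (Embedding.induce X) hc
    (by simpa using hcX), fun h u c hc ↦ ?_⟩
  rw [← Walk.length_map (Embedding.induce (G := G) X).toHom c]
  refine h _ (hc.map Subtype.val_injective) fun x hx ↦ ?_
  obtain ⟨y, -, rfl⟩ := List.mem_map.1 (Walk.support_map _ c ▸ hx)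
  exact y.2

theorem LongCycleFree.induce_range (φ : G ↪g H) (hG : LongCycleFree n G) :
    LongCycleFree n (H.induce (Set.range φ)) :=
  longCycleFree_induce_iff.2 fun _ _ ↦ hG.length_lt_of_support_subset_range φ

/-- A path between two vertices of `T` that avoids `T` otherwise. -/
structure IsEar (T : Set V) {s t : V} (e : G.Walk s t) : Prop where
  isPath : e.IsPath
  left_mem : s ∈ T
  right_mem : t ∈ T
  eq_or_eq : ∀ x ∈ e.support, x ∈ T → x = s ∨ x = t

theorem IsEar.ne {T : Set V} {s t x : V} {e : G.Walk s t} (he : IsEar T e)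
    (hx : x ∈ e.support) (hxT : x ∉ T) : s ≠ t := by
  rintro rfl
  rw [Walk.nil_iff_support_eq.1 (Walk.isPath_iff_nil.1 he.isPath), List.mem_singleton] at hx
  exact hxT (hx ▸ he.left_mem)

theorem IsEar.exists_arms {T : Set V} {s t x : V} {e : G.Walk s t} (he : IsEar T e)
    (hx : x ∈ e.support) (hxT : x ∉ T) :
    ∃ (p : G.Walk x s) (q : G.Walk x t),
      (p.IsPath ∧ ∀ y ∈ p.support, y ∈ T → y = s) ∧ (q.IsPath ∧ ∀ y ∈ q.support, y ∈ T → y = t) ∧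
      (∀ y ∈ e.support, y ∈ p.support ∨ y ∈ q.support) ∧
      ∀ y ∈ p.support, y ∈ q.support → y = x := by
  obtain ⟨p, q, rfl⟩ := Walk.mem_support_iff_exists_append.1 hx
  obtain ⟨hp, hq, hpq⟩ := isPath_append_iff.1 he.isPath
  refine ⟨p.reverse, q, ⟨hp.reverse, fun y hy hyT ↦ ?_⟩, ⟨hq, fun y hy hyT ↦ ?_⟩, by simp,
    by simpa using hpq⟩
  · rw [Walk.support_reverse, List.mem_reverse] at hy
    refine (he.eq_or_eq y (by simp [hy]) hyT).resolve_right ?_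
    rintro rfl
    exact hxT (hpq y hy q.end_mem_support ▸ hyT)
  · refine (he.eq_or_eq y (by simp [hy]) hyT).resolve_left ?_
    rintro rfl
    exact hxT (hpq y p.start_mem_support hy ▸ hyT)

theorem IsEar.exists_disjoint_arms {T : Set V} {s t x y : V} {e : G.Walk s t} (he : IsEar T e)
    (hx : x ∈ e.support) (hxT : x ∉ T) (hy : y ∈ e.support) (hxy : x ≠ y) :
    (∃ (p : G.Walk x s) (q : G.Walk y t),
      (p.IsPath ∧ ∀ z ∈ p.support, z ∈ T → z = s) ∧ (q.IsPath ∧ ∀ z ∈ q.support, z ∈ T → z = t) ∧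
      p.support.Disjoint q.support) ∨
    ∃ (p : G.Walk x t) (q : G.Walk y s),
      (p.IsPath ∧ ∀ z ∈ p.support, z ∈ T → z = t) ∧ (q.IsPath ∧ ∀ z ∈ q.support, z ∈ T → z = s) ∧
      p.support.Disjoint q.support := by
  obtain ⟨p, q, hp, hq, hpq, hmeet⟩ := he.exists_arms hx hxT
  obtain hyp | hyq := hpq y hy
  · obtain ⟨p₁, p₂, rfl⟩ := Walk.mem_support_iff_exists_append.1 hyp
    obtain ⟨-, hp₂, hp₁₂⟩ := isPath_append_iff.1 hp.1
    refine .inr ⟨q, p₂, hq, ⟨hp₂, fun z hz ↦ hp.2 z (by simp [hz])⟩, fun z hzq hz ↦ hxy ?_⟩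
    obtain rfl := hmeet z (by simp [hz]) hzq
    exact hp₁₂ z p₁.start_mem_support hz
  · obtain ⟨q₁, q₂, rfl⟩ := Walk.mem_support_iff_exists_append.1 hyq
    obtain ⟨-, hq₂, hq₁₂⟩ := isPath_append_iff.1 hq.1
    refine .inl ⟨p, q₂, hp, ⟨hq₂, fun z hz ↦ hq.2 z (by simp [hz])⟩, fun z hzp hz ↦ hxy ?_⟩
    obtain rfl := hmeet z hzp (by simp [hz])
    exact hq₁₂ z q₁.start_mem_support hz

theorem IsEar.length_lt {T : Set V} {s t : V} {e : G.Walk s t} (he : IsEar T e)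
    (hn : 2 ≤ n) (hG : LongCycleFree n G) (hT : (G.induce T).Preconnected) : e.length < n := by
  obtain ⟨he, hs, ht, heT⟩ := he
  by_contra! hlen
  obtain ⟨p, hp, hpT⟩ := exists_isPath_of_preconnected_induce hT ht hs
  have := hG _ <| isCycle_append_of_internally_disjoint he hp
    (fun x hx hxp ↦ heT x hx (hpT x hxp)) (by lia)
  rw [Walk.length_append] at this
  lia

open Classical in
theorem LongCycleFree.length_le_mul_countP {T : Set V} (hn : 2 ≤ n) (hG : LongCycleFree n G)
    (hT : (G.induce T).Preconnected) {a b : V} (p : G.Walk a b) (hp : p.IsPath) (ha : a ∈ T)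
    (hb : b ∈ T) : p.length ≤ n * p.support.countP (· ∈ T) := by
  induction hk : p.length using Nat.strong_induction_on generalizing a with | _ k ih
  subst hk
  cases p with
  | nil => simp
  | @cons _ a' _ h p =>
    obtain ⟨w, hw, q, r, rfl, hq⟩ := exists_append_first_mem p ⟨b, p.end_mem_support, hb⟩
    have hear : IsEar T (q.cons h) := ⟨hp.of_append_left (p := q.cons h), ha, hw,
      fun x hx hxT ↦ (List.mem_cons.1 hx).imp id (hq x · hxT)⟩
    have hr := ih r.length (by simp) r (hp.of_append_right (p := q.cons h)) hw rfl
    have hq := hear.length_lt hn hG hT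
    have hcount : r.support.countP (· ∈ T) + 1 ≤
        ((q.append r).cons h).support.countP (· ∈ T) := by
      rw [Walk.support_cons, List.countP_cons_of_pos (by simpa using ha)]
      gcongr
      exact (Walk.support_append_eq_support_dropLast_append q r ▸
        List.sublist_append_right _ _).countP_le
    calc ((q.append r).cons h).length = (q.cons h).length + r.length := by simp; lia
      _ ≤ n * (r.support.countP (· ∈ T) + 1) := by rw [mul_add_one]; lia
      _ ≤ _ := by gcongr

theorem LongCycleFree.length_le_mul_ncard {T : Set V} (hn : 2 ≤ n) (hG : LongCycleFree n G)
    (hT : (G.induce T).Preconnected) (hTfin : T.Finite) {a b : V} {p : G.Walk a b} (hp : p.IsPath)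
    (ha : a ∈ T) (hb : b ∈ T) : p.length ≤ n * T.ncard := by
  classical
  refine (hG.length_le_mul_countP hn hT p hp ha hb).trans (Nat.mul_le_mul_left n ?_)
  rw [List.countP_eq_length_filter, ← List.toFinset_card_of_nodup (hp.support_nodup.filter _),
    ← Set.ncard_coe_finset]
  exact Set.ncard_le_ncard (fun x hx ↦ by simp_all) hTfin

end LongCycles

section DisjointPaths

variable {V W : Type*} {G : SimpleGraph V} {H : SimpleGraph W} {n N l : ℕ} {s t : V}

/-- `G` has `N` pairwise internally disjoint paths of length `l` from `s` to `t`. -/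
def HasDisjointPaths (G : SimpleGraph V) (N : ℕ) (s t : V) (l : ℕ) : Prop :=
  ∃ P : Fin N → G.Walk s t, (∀ j, (P j).IsPath ∧ (P j).length = l) ∧
    ∀ i j, i ≠ j → ∀ x ∈ (P i).support, x ∈ (P j).support → x = s ∨ x = t

theorem HasDisjointPaths.map (φ : G ↪g H) (h : HasDisjointPaths G N s t l) :
    HasDisjointPaths H N (φ s) (φ t) l := by
  obtain ⟨P, hP, hdisj⟩ := h
  refine ⟨fun j ↦ (P j).map φ.toHom, fun j ↦
    ⟨(hP j).1.map φ.injective,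
      (Walk.length_map _ _).trans (hP j).2⟩, fun i j hij x hi hj ↦ ?_⟩
  rw [Walk.support_map, List.mem_map] at hi hj
  obtain ⟨a, ha, rfl⟩ := hi
  obtain ⟨b, hb, hba⟩ := hj
  obtain rfl := φ.injective hba
  exact (hdisj i j hij b ha hb).imp (congrArg φ) (congrArg φ)

theorem HasDisjointPaths.two_mul_lt (h : HasDisjointPaths G N s t l) (hN : 2 ≤ N) (hl : 1 < l)
    (hG : LongCycleFree n G) : 2 * l < n := by
  obtain ⟨P, hP, hdisj⟩ := h
  obtain ⟨i, j, hij⟩ := Fin.nontrivial_iff_two_le.2 hN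
  have := hG _ <| isCycle_append_of_internally_disjoint (hP i).1 (hP j).1.reverse
    (fun x hi hj ↦ hdisj i j hij x hi (by simpa using hj)) ((hP i).2 ▸ hl)
  rw [Walk.length_append, Walk.length_reverse, (hP i).2, (hP j).2] at this
  lia

theorem HasDisjointPaths.add_length_lt (h : HasDisjointPaths G (n * n + 2) s t l)
    (hG : LongCycleFree n G) (hl : 1 < l) {r : G.Walk t s} (hr : r.IsPath) :
    l + r.length < n := by
  classical
  have hln := h.two_mul_lt (by lia) hl hG
  obtain ⟨P, hP, hdisj⟩ := h
  have hr_short : r.length ≤ n * n := by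
    refine (hG.length_le_mul_ncard (by lia) (P 0).connected_induce_support.preconnected
      (P 0).support.finite_toSet hr (P 0).end_mem_support (P 0).start_mem_support).trans
      (Nat.mul_le_mul_left n ?_)
    calc {x | x ∈ (P 0).support}.ncard = (P 0).support.toFinset.card := by
          rw [← Set.ncard_coe_finset, List.coe_toFinset]
      _ ≤ (P 0).support.length := List.toFinset_card_le _
      _ ≤ n := by rw [Walk.length_support, (hP 0).2]; lia
  -- The paths meet `r` in different inner vertices, and `r` is too short to meet all of them.
  obtain ⟨j, hj⟩ : ∃ j, ∀ x ∈ (P j).support, x ∈ r.support → x = s ∨ x = t := by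
    by_contra! hmeet
    choose x hxP hxr hxs hxt using hmeet
    have hinj : x.Injective := fun i j hij ↦ by_contra fun hne ↦
      (hdisj i j hne (x i) (hxP i) (hij ▸ hxP j)).elim (hxs i) (hxt i)
    have : n * n + 2 ≤ r.support.toFinset.card := by
      simpa using Finset.card_le_card_of_injOn x (s := Finset.univ) (by simpa using hxr) hinj.injOn
    have := this.trans (List.toFinset_card_le _)
    rw [Walk.length_support] at this
    lia
  have := hG _ <| isCycle_append_of_internally_disjoint (hP j).1 hr hj ((hP j).2 ▸ hl)
  rwa [Walk.length_append, (hP j).2] at this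

end DisjointPaths

section Separations

variable {V : Type*} {G : SimpleGraph V} {P Q : Set V}

/-- `(P, Q)` is a separation of `G`: the two sides cover `G`, and every edge of `G` lies inside one
of them. -/
structure IsSeparation (G : SimpleGraph V) (P Q : Set V) : Prop where
  mem_or_mem : ∀ x, x ∈ P ∨ x ∈ Q
  mem_and_mem_or : ∀ ⦃x y⦄, G.Adj x y → x ∈ P ∧ y ∈ P ∨ x ∈ Q ∧ y ∈ Q

theorem IsSeparation.mem_right_of_first_mem (h : IsSeparation G P Q) {c t : V} (hc : c ∉ P)
    (ht : t ∈ P) (q : G.Walk c t) (hq : ∀ x ∈ q.support, x ∈ P → x = t) :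
    ∀ x ∈ q.support, x ∈ Q := by
  have hadj := q.adj_penultimate (fun hnil ↦ hc (hnil.eq ▸ ht))
  have htQ : t ∈ Q := (h.mem_and_mem_or hadj).elim
    (fun hP ↦ absurd (hq _ (q.getVert_mem_support _) hP.1) hadj.ne) And.right
  exact fun x hx ↦ (h.mem_or_mem x).elim (fun hxP ↦ hq x hx hxP ▸ htQ) id

theorem IsSeparation.mem_right_of_isEar (h : IsSeparation G P Q) {s t c : V} {e : G.Walk s t}
    (he : IsEar P e) (hc : c ∈ e.support) (hcP : c ∉ P) : ∀ x ∈ e.support, x ∈ Q := by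
  obtain ⟨p, q, hp, hq, hpq, -⟩ := he.exists_arms hc hcP
  exact fun x hx ↦ (hpq x hx).elim (h.mem_right_of_first_mem hcP he.left_mem p hp.2 x)
    (h.mem_right_of_first_mem hcP he.right_mem q hq.2 x)

theorem IsSeparation.exists_isEar_of_isCycle (h : IsSeparation G P Q) {u c : V} {w : G.Walk u u}
    (hw : w.IsCycle) (hwQ : ∃ x ∈ w.support, x ∉ Q) (hc : c ∈ w.support) (hcP : c ∉ P) :
    ∃ (s t : V) (e : G.Walk s t) (r : G.Walk t s), IsEar P e ∧ c ∈ e.support ∧ r.IsPath ∧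
      (∀ x ∈ r.support, x ∈ w.support ∧ x ≠ c) ∧ e.length + r.length = w.length := by
  classical
  wlog huc : u = c generalizing u w
  · simpa using this (hw.rotate hc) (by simpa using hwQ) (by simp) rfl
  subst huc
  obtain ⟨b, hbw, hbQ⟩ := hwQ
  obtain ⟨t, ht, q₁, w', rfl, hq₁⟩ :=
    exists_append_first_mem w ⟨b, hbw, (h.mem_or_mem b).resolve_right hbQ⟩
  obtain ⟨s, hs, q₂, r, hw', hq₂⟩ :=
    exists_append_first_mem w'.reverse ⟨t, w'.reverse.end_mem_support, ht⟩
  obtain rfl : w' = r.reverse.append q₂.reverse := by simpa using congrArg Walk.reverse hw'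
  have hr_not_nil : ¬ r.Nil := fun hnil ↦ by
    have hq₁Q := h.mem_right_of_first_mem hcP ht q₁ hq₁
    have hq₂Q := h.mem_right_of_first_mem hcP hs q₂ hq₂
    have hb : b ∈ q₁.support ∨ b ∈ r.support ∨ b ∈ q₂.support := by simpa using hbw
    rw [Walk.nil_iff_support_eq.1 hnil, List.mem_singleton] at hb
    rcases hb with hb | rfl | hb
    exacts [hbQ (hq₁Q b hb), hbQ (hq₂Q b q₂.end_mem_support), hbQ (hq₂Q b hb)]
  have hcycle : ((q₂.reverse.append q₁).append r.reverse).IsCycle :=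
    Walk.append_assoc .. ▸ isCycle_append_comm (Walk.append_assoc .. ▸ hw)
  have hpath : (q₁.append r.reverse).IsPath :=
    Walk.IsCycle.isPath_of_append_left (q := q₂.reverse) (fun hnil ↦ hcP (hnil.eq ▸ hs))
      (Walk.append_assoc .. ▸ hw)
  refine ⟨s, t, q₂.reverse.append q₁, r.reverse,
    ⟨hcycle.isPath_of_append_left (by simpa using hr_not_nil), hs, ht, fun x hx hxP ↦ ?_⟩,
    by simp, (isPath_append_iff.1 hpath).2.1, fun x hx ↦
      ⟨by simp only [Walk.mem_support_append_iff, hx, true_or, or_true], ?_⟩, by simp; lia⟩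
  · exact ((Walk.mem_support_append_iff ..).1 hx).imp (fun hx ↦ hq₂ x (by simpa using hx) hxP)
      (hq₁ x · hxP)
  · rintro rfl
    exact hcP ((isPath_append_iff.1 hpath).2.2 x q₁.start_mem_support hx ▸ ht)

end Separations

section Saturation

variable {V W : Type*} {G : SimpleGraph V} {H : SimpleGraph W} {n : ℕ} {Q : Set W}

/-- `φ` is saturated with multiplicity `N`: whenever `H` has an ear of `G` with an inner vertex
outside `G`, then `N` disjoint copies of this ear are already present in `G`. -/
def IsSaturated (φ : G ↪g H) (N : ℕ) : Prop :=
  ∀ (s t : V) (e : H.Walk (φ s) (φ t)), IsEar (Set.range φ) e →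
    (∃ x ∈ e.support, x ∉ Set.range φ) → HasDisjointPaths G N s t e.length

theorem LongCycleFree.induce_insert {X : Set W} {φ : G ↪g H} (hX : LongCycleFree n (H.induce X))
    (hφX : Set.range φ ⊆ X) (hφ : IsSaturated φ (n * n + 2))
    (hsep : IsSeparation H (Set.range φ) Q) (hQ : LongCycleFree n (H.induce Q)) (c : W) :
    LongCycleFree n (H.induce (insert c X)) := by
  rw [longCycleFree_induce_iff] at hQ ⊢
  intro u w hw hwX
  by_cases hwc : ∀ x ∈ w.support, x ∈ X
  · exact longCycleFree_induce_iff.1 hX w hw hwc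
  by_cases hwQ : ∀ x ∈ w.support, x ∈ Q
  · exact hQ w hw hwQ
  push Not at hwc hwQ
  obtain ⟨_, hc, hcX⟩ := hwc
  obtain rfl := (hwX _ hc).resolve_right hcX
  have hcφ := mt (@hφX _) hcX
  obtain ⟨s, t, e, r, he, hce, hr, hrw, hlen⟩ := hsep.exists_isEar_of_isCycle hw hwQ hc hcφ
  obtain ⟨⟨a, rfl⟩, ⟨b, rfl⟩⟩ := And.intro he.left_mem he.right_mem
  have hrX : ∀ x ∈ r.support, x ∈ X := fun x hx ↦ (hwX x (hrw x hx).1).resolve_left (hrw x hx).2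
  have hpaths := (hφ a b e he ⟨_, hce, hcφ⟩).map
    (codRestrictInduce φ X fun x ↦ hφX ⟨x, rfl⟩)
  have hel : 1 < e.length := one_lt_length_of_mem_support hce
    (fun h ↦ hcφ (h ▸ he.left_mem)) (fun h ↦ hcφ (h ▸ he.right_mem))
  calc w.length = e.length + (r.induce X hrX).length := by rw [length_induce r hrX, hlen]
    _ < n := hpaths.add_length_lt hX hel (isPath_induce hrX hr)

theorem LongCycleFree.of_isSaturated {φ : G ↪g H} (hφ : IsSaturated φ (n * n + 2))
    (hsep : IsSeparation H (Set.range φ) Q) (hG : LongCycleFree n G)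
    (hQ : LongCycleFree n (H.induce Q)) : LongCycleFree n H := by
  classical
  have hunion (Y : Finset W) : LongCycleFree n (H.induce (Set.range φ ∪ Y)) := by
    induction Y using Finset.induction_on with
    | empty =>
      rw [Finset.coe_empty, Set.union_empty]
      exact hG.induce_range φ
    | insert c Y _ ih =>
      rw [Finset.coe_insert, Set.union_insert]
      exact ih.induce_insert Set.subset_union_left hφ hsep hQ c
  exact fun u w hw ↦ longCycleFree_induce_iff.1 (hunion w.support.toFinset) w hw (by simp_all)

end Saturation

section FreeAmalgam

variable {α β γ : Type*} {A : SimpleGraph α} {B : SimpleGraph β} {C : SimpleGraph γ} {n N : ℕ}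

theorem map_sup_map_adj_iff {δ : Type*} {i : β ↪ δ} {k : γ ↪ δ} (f : A ↪g B) (g : A ↪g C)
    (h : ∀ b c, i b = k c → ∃ a, f a = b ∧ g a = c) {b b' : β} :
    (B.map i ⊔ C.map k).Adj (i b) (i b') ↔ B.Adj b b' := by
  rw [sup_adj, map_adj_apply, or_iff_left_iff_imp, map_adj]
  rintro ⟨c, c', hcc', hc, hc'⟩
  obtain ⟨a, rfl, rfl⟩ := h b c hc.symm
  obtain ⟨a', rfl, rfl⟩ := h b' c' hc'.symm
  rwa [f.map_adj_iff, ← g.map_adj_iff]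

variable (f : A ↪g B) (g : A ↪g C)

open Classical in
/-- The inclusion of the vertices of `C` into those of the free amalgam of `B` and `C` over `A`,
which are the vertices of `B` and the vertices of `C` outside `A`. -/
noncomputable def amalgamMap : γ ↪ β ⊕ ↥(Set.range g)ᶜ :=
  (Equiv.Set.sumCompl (Set.range g)).symm.toEmbedding.trans
    (((Equiv.ofInjective g g.injective).symm.toEmbedding.trans f.toEmbedding).sumMap (.refl _))

theorem amalgamMap_apply (a : α) : amalgamMap f g (g a) = .inl (f a) := by
  classical
  simp [amalgamMap, Equiv.Set.sumCompl_symm_apply_of_mem (Set.mem_range_self (f := g) a)]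

theorem amalgamMap_of_notMem (c : ↥(Set.range g)ᶜ) : amalgamMap f g c = .inr c := by
  simp [amalgamMap]

theorem exists_of_inl_eq_amalgamMap (b : β) (c : γ) (h : .inl b = amalgamMap f g c) :
    ∃ a, f a = b ∧ g a = c := by
  by_cases hc : c ∈ Set.range g
  · obtain ⟨a, rfl⟩ := hc
    exact ⟨a, by simpa [amalgamMap_apply, eq_comm] using h, rfl⟩
  · simp [amalgamMap_of_notMem f g ⟨c, hc⟩] at h

/-- The free amalgam of `B` and `C` over `A`. -/
noncomputable def freeAmalgam : SimpleGraph (β ⊕ ↥(Set.range g)ᶜ) :=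
  B.map Function.Embedding.inl ⊔ C.map (amalgamMap f g)

/-- The embedding of the left factor into the free amalgam. -/
noncomputable def freeAmalgamLeft : B ↪g freeAmalgam f g where
  toEmbedding := .inl
  map_rel_iff' := map_sup_map_adj_iff f g (exists_of_inl_eq_amalgamMap f g)

/-- The embedding of the right factor into the free amalgam. -/
noncomputable def freeAmalgamRight : C ↪g freeAmalgam f g where
  toEmbedding := amalgamMap f g
  map_rel_iff' := by
    rw [freeAmalgam, sup_comm]
    exact map_sup_map_adj_iff g f fun c b h ↦
      (exists_of_inl_eq_amalgamMap f g b c h.symm).imp fun _ ↦ And.symm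

theorem freeAmalgamRight_comp (a : α) :
    freeAmalgamRight f g (g a) = freeAmalgamLeft f g (f a) :=
  amalgamMap_apply f g a

theorem freeAmalgam_isSeparation :
    IsSeparation (freeAmalgam f g) (Set.range (freeAmalgamLeft f g))
      (Set.range (freeAmalgamRight f g)) where
  mem_or_mem
    | .inl b => .inl ⟨b, rfl⟩
    | .inr c => .inr ⟨c, amalgamMap_of_notMem f g c⟩
  mem_and_mem_or _ _ := by
    rintro (⟨-, b, b', -, rfl, rfl⟩ | ⟨-, c, c', -, rfl, rfl⟩)
    exacts [.inl ⟨⟨b, rfl⟩, ⟨b', rfl⟩⟩, .inr ⟨⟨c, rfl⟩, ⟨c', rfl⟩⟩]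

variable {f g}

theorem exists_eq_of_left_mem_range_right {b : β}
    (hb : freeAmalgamLeft f g b ∈ Set.range (freeAmalgamRight f g)) : ∃ a, f a = b :=
  hb.elim fun c hc ↦ (exists_of_inl_eq_amalgamMap f g b c hc.symm).imp fun _ ↦ And.left

theorem right_mem_range_left_iff {c : γ} :
    freeAmalgamRight f g c ∈ Set.range (freeAmalgamLeft f g) ↔ c ∈ Set.range g := by
  constructor
  · rintro ⟨b, hb⟩
    exact (exists_of_inl_eq_amalgamMap f g b c hb).imp fun _ ↦ And.right
  · rintro ⟨a, rfl⟩
    exact ⟨f a, (freeAmalgamRight_comp f g a).symm⟩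

theorem IsSaturated.freeAmalgamLeft (hg : IsSaturated g N) :
    IsSaturated (freeAmalgamLeft f g) N := by
  rintro s t e he ⟨x, hxe, hx⟩
  have heC := (freeAmalgam_isSeparation f g).mem_right_of_isEar he hxe hx
  obtain ⟨a, rfl⟩ := exists_eq_of_left_mem_range_right (heC _ e.start_mem_support)
  obtain ⟨b, rfl⟩ := exists_eq_of_left_mem_range_right (heC _ e.end_mem_support)
  obtain ⟨p, rfl⟩ := exists_walk_map_copy_eq (freeAmalgamRight f g) (freeAmalgamRight_comp f g a)
    (freeAmalgamRight_comp f g b) e heC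
  have hp : IsEar (Set.range g) p := by
    refine ⟨.of_map ((Walk.isPath_copy _ _ _).1 he.isPath), ⟨a, rfl⟩, ⟨b, rfl⟩, fun c hc hcg ↦ ?_⟩
    have := he.eq_or_eq (freeAmalgamRight f g c) (by simpa using hc)
      (right_mem_range_left_iff.2 hcg)
    simpa only [← freeAmalgamRight_comp, EmbeddingLike.apply_eq_iff_eq] using this
  have hxp : ∃ c ∈ p.support, c ∉ Set.range g := by
    obtain ⟨c, hc, rfl⟩ : ∃ c ∈ p.support, freeAmalgamRight f g c = x := by simpa using hxe
    exact ⟨c, hc, fun h ↦ hx (right_mem_range_left_iff.2 h)⟩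
  simpa using (hg a b p hp hxp).map f

theorem LongCycleFree.freeAmalgam (hB : LongCycleFree n B) (hC : LongCycleFree n C)
    (hg : IsSaturated g (n * n + 2)) : LongCycleFree n (freeAmalgam f g) :=
  .of_isSaturated hg.freeAmalgamLeft (freeAmalgam_isSeparation f g) hB
    (hC.induce_range (freeAmalgamRight f g))

end FreeAmalgam

section Linkages

variable {V W : Type*} {G : SimpleGraph V} {H : SimpleGraph W} {T : Set V} {k m : ℕ} {s t : V}

/-- Two disjoint paths of total length at least `k` lead from `x` and from `y` to `T`. -/
def LinkedTo (G : SimpleGraph V) (T : Set V) (k : ℕ) (x y : V) : Prop :=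
  ∃ a ∈ T, ∃ b ∈ T, ∃ (p : G.Walk x a) (q : G.Walk y b), p.IsPath ∧ q.IsPath ∧
    p.support.Disjoint q.support ∧ k ≤ p.length + q.length

theorem LinkedTo.symm (h : LinkedTo G T k s t) : LinkedTo G T k t s :=
  let ⟨a, ha, b, hb, p, q, hp, hq, hpq, hk⟩ := h
  ⟨b, hb, a, ha, q, p, hq, hp, hpq.symm, add_comm p.length _ ▸ hk⟩

theorem LinkedTo.mono (h : LinkedTo G T k s t) (hmk : m ≤ k) : LinkedTo G T m s t :=
  let ⟨a, ha, b, hb, p, q, hp, hq, hpq, hk⟩ := h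
  ⟨a, ha, b, hb, p, q, hp, hq, hpq, hmk.trans hk⟩

theorem isPath_append_map (φ : G ↪g H) {a : V} {x : W} {r : H.Walk x (φ s)} {p : G.Walk s a}
    (hr : r.IsPath ∧ ∀ z ∈ r.support, z ∈ Set.range φ → z = φ s) (hp : p.IsPath) :
    (r.append (p.map φ.toHom)).IsPath := by
  refine isPath_append_iff.2 ⟨hr.1, hp.map φ.injective, fun z hz hzp ↦ hr.2 z hz ?_⟩
  obtain ⟨v, -, rfl⟩ := List.mem_map.1 (p.support_map _ ▸ hzp)
  exact ⟨v, rfl⟩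

theorem LinkedTo.extend (φ : G ↪g H) (h : LinkedTo G T k s t) {x y : W} {r : H.Walk x (φ s)}
    {r' : H.Walk y (φ t)} (hr : r.IsPath ∧ ∀ z ∈ r.support, z ∈ Set.range φ → z = φ s)
    (hr' : r'.IsPath ∧ ∀ z ∈ r'.support, z ∈ Set.range φ → z = φ t)
    (hrr' : r.support.Disjoint r'.support) :
    LinkedTo H (φ '' T) (k + (r.length + r'.length)) x y := by
  obtain ⟨a, ha, b, hb, p, q, hp, hq, hpq, hk⟩ := h
  refine ⟨φ a, ⟨a, ha, rfl⟩, φ b, ⟨b, hb, rfl⟩, r.append (p.map φ.toHom), r'.append (q.map φ.toHom),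
    isPath_append_map φ hr hp, isPath_append_map φ hr' hq, fun z hz hz' ↦ ?_, by simp; lia⟩
  simp only [Walk.mem_support_append_iff, Walk.support_map, List.mem_map] at hz hz'
  obtain hz | ⟨u, hu, rfl⟩ := hz <;> obtain hz' | ⟨v, hv, hvz⟩ := hz'
  · exact hrr' hz hz'
  · obtain rfl : v = s := φ.injective (hvz.trans (hr.2 z hz ⟨v, hvz⟩))
    exact hpq p.start_mem_support hv
  · obtain rfl : u = t := φ.injective (hr'.2 _ hz' ⟨u, rfl⟩)
    exact hpq hu q.start_mem_support
  · obtain rfl := φ.injective hvz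
    exact hpq hu hv

end Linkages

section EarDecompositions

variable {V W : Type*} {G : SimpleGraph V} {H : SimpleGraph W} {n N : ℕ}

/-- A record of how `G` arises from a base by successively adding ears of length less than `n`.
A vertex of the base is labelled `none`; a vertex added with an ear carries the ends of the ear,
its length, and an index in `Fin N` that tells apart ears with the same ends and length. The level
bounds the nesting depth of ears, and every two vertices are linked to the base by paths as long as
their levels. -/
structure EarDecomposition (G : SimpleGraph V) (n N : ℕ) where
  label : V → Option (V × V × Fin n × Fin N)
  level : V → ℕ
  level_eq_zero : ∀ ⦃x⦄, label x = none → level x = 0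
  level_lt : ∀ ⦃x s t l j⦄, label x = some (s, t, l, j) → level s < level x ∧ level t < level x
  exists_isPath : ∀ ⦃x s t l j⦄, label x = some (s, t, l, j) →
    ∃ p : G.Walk s t, p.IsPath ∧ p.length = l ∧
      ∀ y, y ∈ p.support ↔ y = s ∨ y = t ∨ label y = some (s, t, l, j)
  linked : ∀ ⦃x y⦄, x ≠ y → LinkedTo G {v | label v = none} (max (level x) (level y)) x y

namespace EarDecomposition

/-- The decomposition without ears. -/
def noEars (G : SimpleGraph V) (n N : ℕ) : EarDecomposition G n N where
  label _ := none
  level _ := 0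
  level_eq_zero _ _ := rfl
  level_lt _ _ _ _ _ h := by cases h
  exists_isPath _ _ _ _ _ h := by cases h
  linked x y hxy := ⟨x, rfl, y, rfl, .nil, .nil, .nil, .nil, by simpa using hxy.symm, by simp⟩

/-- The vertices that belong to no ear. -/
def base (E : EarDecomposition G n N) : Set V :=
  {v | E.label v = none}

section AddEar

variable (E : EarDecomposition G n N) (φ : G ↪g H) {s t : V} (l : Fin n) (j : Fin N)

/-- The labels of `G` transported along `φ`, all new vertices being labelled by one ear. -/
noncomputable def addEarLabel (s t : V) : W → Option (W × W × Fin n × Fin N) :=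
  Function.extend φ (fun v ↦ (E.label v).map (Prod.map φ (Prod.map φ id)))
    fun _ ↦ some (φ s, φ t, l, j)

/-- The levels of `G` transported along `φ`, all new vertices lying one level above `s`, `t`. -/
noncomputable def addEarLevel (s t : V) : W → ℕ :=
  Function.extend φ E.level fun _ ↦ max (E.level s) (E.level t) + 1

theorem addEarLabel_apply (v : V) :
    E.addEarLabel φ l j s t (φ v) = (E.label v).map (Prod.map φ (Prod.map φ id)) :=
  φ.injective.extend_apply ..

theorem addEarLabel_apply_eq_some_iff {v a b : V} {l' : Fin n} {j' : Fin N} :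
    E.addEarLabel φ l j s t (φ v) = some (φ a, φ b, l', j') ↔
      E.label v = some (a, b, l', j') := by
  simp [addEarLabel_apply]

theorem addEarLabel_of_notMem {x : W} (hx : x ∉ Set.range φ) :
    E.addEarLabel φ l j s t x = some (φ s, φ t, l, j) :=
  Function.extend_apply' _ _ _ hx

theorem addEarLevel_apply (v : V) : E.addEarLevel φ s t (φ v) = E.level v :=
  φ.injective.extend_apply ..

theorem addEarLevel_of_notMem {x : W} (hx : x ∉ Set.range φ) :
    E.addEarLevel φ s t x = max (E.level s) (E.level t) + 1 :=
  Function.extend_apply' _ _ _ hx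

theorem setOf_addEarLabel_eq_none :
    {x | E.addEarLabel φ l j s t x = none} = φ '' E.base := by
  ext x
  by_cases hx : x ∈ Set.range φ
  · obtain ⟨v, rfl⟩ := hx
    simp [addEarLabel_apply, base]
  · simp only [Set.mem_ofPred_eq, addEarLabel_of_notMem E φ l j hx, reduceCtorEq, false_iff]
    exact fun h ↦ hx (Set.image_subset_range _ _ h)

variable {E φ l j} {e : H.Walk (φ s) (φ t)}

theorem mem_map_support_iff_addEarLabel {a b : V} {l' : Fin n} {j' : Fin N}
    (hnew : ¬ ∃ v, E.label v = some (s, t, l, j)) {p : G.Walk a b}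
    (hp : ∀ v, v ∈ p.support ↔ v = a ∨ v = b ∨ E.label v = some (a, b, l', j'))
    (hlab : ∃ v, E.label v = some (a, b, l', j')) (y : W) :
    y ∈ (p.map φ.toHom).support ↔
      y = φ a ∨ y = φ b ∨ E.addEarLabel φ l j s t y = some (φ a, φ b, l', j') := by
  by_cases hy : y ∈ Set.range φ
  · obtain ⟨v, rfl⟩ := hy
    simp [addEarLabel_apply_eq_some_iff, hp]
  · refine iff_of_false (fun h ↦ hy ?_) ?_
    · obtain ⟨v, -, rfl⟩ := List.mem_map.1 (p.support_map _ ▸ h)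
      exact ⟨v, rfl⟩
    · rintro (rfl | rfl | h)
      · exact hy ⟨a, rfl⟩
      · exact hy ⟨b, rfl⟩
      · rw [addEarLabel_of_notMem E φ l j hy] at h
        simp only [Option.some.injEq, Prod.mk.injEq, EmbeddingLike.apply_eq_iff_eq] at h
        obtain ⟨rfl, rfl, rfl, rfl⟩ := h
        exact hnew hlab

theorem mem_support_iff_addEarLabel (he : IsEar (Set.range φ) e)
    (hcover : ∀ x, x ∈ Set.range φ ∨ x ∈ e.support)
    (hnew : ¬ ∃ v, E.label v = some (s, t, l, j)) (y : W) :
    y ∈ e.support ↔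
      y = φ s ∨ y = φ t ∨ E.addEarLabel φ l j s t y = some (φ s, φ t, l, j) := by
  by_cases hy : y ∈ Set.range φ
  · have hlab : E.addEarLabel φ l j s t y ≠ some (φ s, φ t, l, j) := by
      obtain ⟨v, rfl⟩ := hy
      exact fun h ↦ hnew ⟨v, (E.addEarLabel_apply_eq_some_iff φ l j).1 h⟩
    simp only [hlab, or_false]
    refine ⟨(he.eq_or_eq y · hy), ?_⟩
    rintro (rfl | rfl)
    exacts [e.start_mem_support, e.end_mem_support]
  · simp [(hcover y).resolve_left hy, addEarLabel_of_notMem E φ l j hy]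

theorem linkedTo_of_isEar (he : IsEar (Set.range φ) e) {x : W} (hx : x ∈ e.support)
    (hxφ : x ∉ Set.range φ) (v : V) :
    LinkedTo H (φ '' E.base) (max (max (E.level s) (E.level t) + 1) (E.level v)) x (φ v) := by
  obtain ⟨p, q, hp, hq, -⟩ := he.exists_arms hx hxφ
  have linked_through {w : V} (hwv : w ≠ v) {r : H.Walk x (φ w)}
      (hr : r.IsPath ∧ ∀ z ∈ r.support, z ∈ Set.range φ → z = φ w) :
      LinkedTo H (φ '' E.base) (max (E.level w) (E.level v) + 1) x (φ v) := by
    have hr_pos : 0 < r.length := (Walk.not_nil_iff_lt_length).1 fun h ↦ hxφ ⟨w, h.eq.symm⟩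
    have hdisj : r.support.Disjoint (Walk.nil : H.Walk (φ v) (φ v)).support := by
      simpa using fun h ↦ hwv (φ.injective (hr.2 _ h ⟨v, rfl⟩)).symm
    exact ((E.linked hwv).extend φ hr ⟨.nil, by simp⟩ hdisj).mono (by simp; lia)
  -- Leave the ear through its end of larger level, unless this end is `v` itself.
  by_cases hs : s ≠ v ∧ (t = v ∨ E.level t ≤ E.level s)
  · refine (linked_through hs.1 hp).mono ?_
    obtain ⟨-, rfl | hts⟩ := hs <;> lia
  · have hst := he.ne hx hxφ
    have htv : t ≠ v := fun h ↦ hs ⟨h ▸ φ.injective.ne_iff.1 hst, .inl h⟩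
    refine (linked_through htv hq).mono ?_
    by_cases hsv : s = v
    · subst hsv; lia
    · simp only [ne_eq, hsv, htv, not_false_eq_true, true_and, false_or, not_le] at hs; lia

theorem linkedTo_of_isEar_of_mem (he : IsEar (Set.range φ) e) {x y : W} (hx : x ∈ e.support)
    (hxφ : x ∉ Set.range φ) (hy : y ∈ e.support) (hxy : x ≠ y) :
    LinkedTo H (φ '' E.base) (max (E.level s) (E.level t) + 1) x y := by
  have hst : s ≠ t := φ.injective.ne_iff.1 (he.ne hx hxφ)
  have length_pos {w : V} (r : H.Walk x (φ w)) : 0 < r.length :=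
    Walk.not_nil_iff_lt_length.1 fun h ↦ hxφ ⟨w, h.eq.symm⟩
  obtain ⟨p, q, hp, hq, hpq⟩ | ⟨p, q, hp, hq, hpq⟩ := he.exists_disjoint_arms hx hxφ hy hxy
  · exact ((E.linked hst).extend φ hp hq hpq).mono (by have := length_pos p; lia)
  · exact ((E.linked hst).symm.extend φ hp hq hpq).mono (by have := length_pos p; lia)

/-- The decomposition of `H` obtained by adding one ear `e` to the copy of `G` in `H`, where
`(s, t, l, j)` is a label not yet in use. -/
noncomputable def addEar (E : EarDecomposition G n N) (he : IsEar (Set.range φ) e)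
    (hcover : ∀ x, x ∈ Set.range φ ∨ x ∈ e.support) (hl : e.length = l)
    (hnew : ¬ ∃ v, E.label v = some (s, t, l, j)) : EarDecomposition H n N where
  label := E.addEarLabel φ l j s t
  level := E.addEarLevel φ s t
  level_eq_zero x hx := by
    obtain ⟨v, hv, rfl⟩ := (E.setOf_addEarLabel_eq_none φ l j).subset hx
    rw [addEarLevel_apply, E.level_eq_zero hv]
  level_lt x a b l' j' hx := by
    by_cases hxφ : x ∈ Set.range φ
    · obtain ⟨v, rfl⟩ := hxφ
      obtain ⟨⟨a, b, _⟩, hv, hab⟩ := Option.map_eq_some_iff.1 (E.addEarLabel_apply φ l j v ▸ hx)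
      cases hab
      simpa only [addEarLevel_apply] using E.level_lt hv
    · cases (E.addEarLabel_of_notMem φ l j hxφ).symm.trans hx
      simp only [addEarLevel_apply, addEarLevel_of_notMem E φ hxφ]
      lia
  exists_isPath x a b l' j' hx := by
    by_cases hxφ : x ∈ Set.range φ
    · obtain ⟨v, rfl⟩ := hxφ
      obtain ⟨⟨a, b, _⟩, hv, hab⟩ := Option.map_eq_some_iff.1 (E.addEarLabel_apply φ l j v ▸ hx)
      cases hab
      obtain ⟨p, hp, hpl, hpv⟩ := E.exists_isPath hv
      exact ⟨p.map φ.toHom, hp.map φ.injective, (p.length_map _).trans hpl,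
        mem_map_support_iff_addEarLabel hnew hpv ⟨v, hv⟩⟩
    · cases (E.addEarLabel_of_notMem φ l j hxφ).symm.trans hx
      exact ⟨e, he.isPath, hl, mem_support_iff_addEarLabel he hcover hnew⟩
  linked x y hxy := by
    have mem_support {z : W} (hz : z ∉ Set.range φ) := (hcover z).resolve_left hz
    rw [setOf_addEarLabel_eq_none]
    by_cases hx : x ∈ Set.range φ <;> by_cases hy : y ∈ Set.range φ
    · obtain ⟨⟨u, rfl⟩, ⟨v, rfl⟩⟩ := And.intro hx hy
      rw [addEarLevel_apply, addEarLevel_apply]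
      exact (E.linked (ne_of_apply_ne φ hxy)).extend φ (r := .nil) (r' := .nil) (by simp)
        (by simp) (by simpa using hxy.symm)
    · obtain ⟨u, rfl⟩ := hx
      rw [addEarLevel_apply, addEarLevel_of_notMem E φ hy, max_comm]
      exact (linkedTo_of_isEar he (mem_support hy) hy u).symm
    · obtain ⟨v, rfl⟩ := hy
      rw [addEarLevel_apply, addEarLevel_of_notMem E φ hx]
      exact linkedTo_of_isEar he (mem_support hx) hx v
    · rw [addEarLevel_of_notMem E φ hx, addEarLevel_of_notMem E φ hy, max_self]
      exact linkedTo_of_isEar_of_mem he (mem_support hx) hx (mem_support hy) hxy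

theorem base_addEar (he : IsEar (Set.range φ) e)
    (hcover : ∀ x, x ∈ Set.range φ ∨ x ∈ e.support) (hl : e.length = l)
    (hnew : ¬ ∃ v, E.label v = some (s, t, l, j)) :
    (E.addEar he hcover hl hnew).base = φ '' E.base :=
  E.setOf_addEarLabel_eq_none φ l j

end AddEar

section Bounds

open Finset

variable (E : EarDecomposition G n N)

theorem hasDisjointPaths {s t : V} {l : Fin n}
    (h : ∀ j, ∃ v, E.label v = some (s, t, l, j)) : HasDisjointPaths G N s t l := by
  choose v hv using h
  choose P hP hPl hPv using fun j ↦ E.exists_isPath (hv j)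
  refine ⟨P, fun j ↦ ⟨hP j, hPl j⟩, fun i j hij x hi hj ↦ ?_⟩
  obtain rfl | rfl | hxi := (hPv i x).1 hi
  · exact .inl rfl
  · exact .inr rfl
  · refine ((hPv j x).1 hj).imp_right (Or.resolve_right · fun hxj ↦ hij ?_)
    cases hxi.symm.trans hxj
    rfl

theorem exists_linkedTo {x : V} (hx : x ∉ E.base) :
    ∃ s, x ≠ s ∧ LinkedTo G E.base (E.level x) x s := by
  obtain ⟨⟨s, _⟩, hlabel⟩ := Option.ne_none_iff_exists'.1 hx
  have hxs : x ≠ s := fun h ↦ (h ▸ E.level_lt hlabel).1.false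
  exact ⟨s, hxs, (E.linked hxs).mono (le_max_left _ _)⟩

theorem exists_reachable_base (x : V) : ∃ a ∈ E.base, G.Reachable x a := by
  by_cases hx : x ∈ E.base
  · exact ⟨x, hx, .rfl⟩
  · obtain ⟨_, _, a, ha, _, _, p, _⟩ := E.exists_linkedTo hx
    exact ⟨a, ha, ⟨p⟩⟩

theorem preconnected (hE : (G.induce E.base).Preconnected) : G.Preconnected := fun x y ↦ by
  obtain ⟨a, ha, hxa⟩ := E.exists_reachable_base x
  obtain ⟨b, hb, hyb⟩ := E.exists_reachable_base y
  exact (hxa.trans ((hE ⟨a, ha⟩ ⟨b, hb⟩).map (Embedding.induce E.base).toHom)).trans hyb.symm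

theorem exists_isPath_level_lt {x : V} (hx : x ∉ E.base) :
    ∃ a ∈ E.base, ∃ b ∈ E.base, ∃ p : G.Walk a b, p.IsPath ∧ E.level x < p.length := by
  obtain ⟨_, _, a, ha, _, _, r, _⟩ := E.exists_linkedTo hx
  have hadj : G.Adj x r.snd := r.adj_snd fun h ↦ hx (h.eq ▸ ha)
  obtain ⟨a, ha, b, hb, p, q, hp, hq, hpq, hlevel⟩ := E.linked hadj.ne
  refine ⟨a, ha, b, hb, p.reverse.append (.cons hadj q), isPath_append_iff.2
    ⟨hp.reverse, hq.cons fun h ↦ hpq p.start_mem_support h, fun z hz hz' ↦ ?_⟩, ?_⟩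
  · exact (List.mem_cons.1 hz').resolve_right (hpq (by simpa using hz))
  · simp only [Walk.length_append, Walk.length_reverse, Walk.length_cons]; lia

theorem level_le (hn : 2 ≤ n) (hG : LongCycleFree n G) (hE : (G.induce E.base).Preconnected)
    (hfin : E.base.Finite) (x : V) : E.level x ≤ n * E.base.ncard := by
  by_cases hx : x ∈ E.base
  · simp [E.level_eq_zero hx]
  · obtain ⟨a, ha, b, hb, p, hp, hlevel⟩ := E.exists_isPath_level_lt hx
    exact hlevel.le.trans (hG.length_le_mul_ncard hn hE hfin hp ha hb)

/-- An upper bound for the number of vertices of level less than `k` when the base has `b` vertices: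
beyond the base, there are at most `n` vertices for each label. -/
def levelBound (n N b : ℕ) : ℕ → ℕ
  | 0 => 0
  | k + 1 => b + n * (levelBound n N b k * (levelBound n N b k * (n * N)))

variable [Fintype V]

theorem card_label_eq_le [DecidableEq V] (s t : V) (l : Fin n) (j : Fin N) :
    #{x | E.label x = some (s, t, l, j)} ≤ n := by
  by_cases h : ∃ x, E.label x = some (s, t, l, j)
  · obtain ⟨x, hx⟩ := h
    obtain ⟨p, -, hpl, hp⟩ := E.exists_isPath hx
    calc #{x | E.label x = some (s, t, l, j)} ≤ #p.support.toFinset :=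
          card_le_card fun y hy ↦ by simp_all
      _ ≤ p.support.length := List.toFinset_card_le _
      _ ≤ n := by rw [Walk.length_support, hpl]; exact l.2
  · rw [filter_eq_empty_iff.2 fun x _ hx ↦ h ⟨x, hx⟩]
    exact Nat.zero_le n

theorem card_level_lt_succ_le (k : ℕ) :
    #{x | E.level x < k + 1 ∧ E.label x ≠ none} ≤
      n * (#{x | E.level x < k} * (#{x | E.level x < k} * (n * N))) := by
  classical
  set S : Finset V := {x | E.level x < k}
  set L : Finset V := {x | E.level x < k + 1 ∧ E.label x ≠ none}
  have exists_label {x : V} (hx : x ∈ L) :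
      ∃ s ∈ S, ∃ t ∈ S, ∃ l j, E.label x = some (s, t, l, j) := by
    simp only [L, S, mem_filter_univ] at hx ⊢
    obtain ⟨⟨s, t, l, j⟩, hlabel⟩ := Option.ne_none_iff_exists'.1 hx.2
    have := E.level_lt hlabel
    exact ⟨s, by lia, t, by lia, l, j, hlabel⟩
  have himage : L.image E.label ⊆ (S ×ˢ S ×ˢ univ).map .some := by
    refine image_subset_iff.2 fun x hx ↦ ?_
    obtain ⟨s, hs, t, ht, l, j, hlabel⟩ := exists_label hx
    simp [hlabel, hs, ht]
  calc #L ≤ n * #(L.image E.label) := by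
        refine card_le_mul_card_image L n fun o ho ↦ ?_
        obtain ⟨x, hx, rfl⟩ := mem_image.1 ho
        obtain ⟨s, -, t, -, l, j, hlabel⟩ := exists_label hx
        rw [hlabel]
        exact (card_le_card (filter_subset_filter _ (subset_univ L))).trans
          (E.card_label_eq_le s t l j)
    _ ≤ n * #((S ×ˢ S ×ˢ (univ : Finset (Fin n × Fin N))).map .some) := by gcongr
    _ = n * (#S * (#S * (n * N))) := by simp

theorem card_level_lt_le (k : ℕ) : #{x | E.level x < k} ≤ levelBound n N E.base.ncard k := by
  classical
  induction k with
  | zero => simp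
  | succ k ih =>
    have card_base : #{x | E.level x < k + 1 ∧ E.label x = none} ≤ E.base.ncard := by
      rw [← Set.ncard_coe_finset]
      exact Set.ncard_le_ncard fun x hx ↦ by simp_all [base]
    calc #{x | E.level x < k + 1}
        = #{x | E.level x < k + 1 ∧ E.label x = none} +
            #{x | E.level x < k + 1 ∧ E.label x ≠ none} := by
          rw [← card_filter_add_card_filter_not (E.label · = none), filter_filter, filter_filter]
      _ ≤ E.base.ncard + n * (#{x | E.level x < k} * (#{x | E.level x < k} * (n * N))) :=
          add_le_add card_base (E.card_level_lt_succ_le k)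
      _ ≤ levelBound n N E.base.ncard (k + 1) := by
          unfold levelBound; gcongr

theorem card_le (hn : 2 ≤ n) (hG : LongCycleFree n G) (hE : (G.induce E.base).Preconnected) :
    Fintype.card V ≤ levelBound n N E.base.ncard (n * E.base.ncard + 1) := by
  refine le_trans ?_ (E.card_level_lt_le _)
  rw [filter_true_of_mem fun x _ ↦ Nat.lt_succ_of_le (E.level_le hn hG hE E.base.toFinite x),
    card_univ]

end Bounds

end EarDecomposition

end EarDecompositions

section EarExtensions

open EarDecomposition

variable {U V W : Type*} {A : SimpleGraph U} {G : SimpleGraph V} {H : SimpleGraph W} {n N : ℕ}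

theorem preconnected_induce_range (φ : G ↪g H) (hG : G.Preconnected) :
    (H.induce (Set.range φ)).Preconnected :=
  hG.map φ.isoInduceRange.toHom φ.isoInduceRange.surjective

theorem IsEar.induce {T X : Set V} {s t : V} {e : G.Walk s t} (he : IsEar T e)
    (hX : ∀ x ∈ e.support, x ∈ X) : IsEar ((↑) ⁻¹' T : Set X) (e.induce X hX) where
  isPath := isPath_induce hX he.isPath
  left_mem := he.left_mem
  right_mem := he.right_mem
  eq_or_eq x hx hxT := by
    rw [Walk.support_induce, List.mem_attachWith] at hx
    exact (he.eq_or_eq x hx hxT).imp Subtype.ext Subtype.ext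

theorem range_codRestrictInduce (φ : G ↪g H) (X : Set W) (hX : ∀ v, φ v ∈ X) :
    Set.range (codRestrictInduce φ X hX) = (↑) ⁻¹' Set.range φ :=
  Set.ext fun _ ↦ exists_congr fun _ ↦ Subtype.ext_iff

/-- `i` exhibits `G` as a long-cycle-free graph that arises from its subgraph `A` by successively
adding ears, at most `N` of them with the same ends and the same length. -/
def IsEarExtension (n N : ℕ) (i : A ↪g G) : Prop :=
  LongCycleFree n G ∧ ∃ E : EarDecomposition G n N, E.base = Set.range i

theorem isEarExtension_refl (N : ℕ) (hA : LongCycleFree n A) :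
    IsEarExtension n N (.refl : A ↪g A) :=
  ⟨hA, .noEars A n N, Set.range_id.symm ▸ Set.eq_univ_of_forall fun _ ↦ rfl⟩

theorem IsEarExtension.card_le [Finite U] [Fintype V] {i : A ↪g G} (h : IsEarExtension n N i)
    (hn : 2 ≤ n) (hA : A.Preconnected) :
    Fintype.card V ≤ levelBound n N (Nat.card U) (n * Nat.card U + 1) := by
  obtain ⟨hG, E, hE⟩ := h
  have := E.card_le hn hG (hE ▸ preconnected_induce_range i hA)
  rwa [hE, Set.ncard_range_of_injective i.injective] at this

theorem IsEarExtension.exists_card_lt [Fintype V] {i : A ↪g G} (h : IsEarExtension n N i)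
    (hn : 2 ≤ n) (hA : A.Preconnected) (hH : LongCycleFree n H) {φ : G ↪g H}
    (hφ : ¬ IsSaturated φ N) :
    ∃ (X : Set W) (_ : Fintype X) (i' : A ↪g H.induce X),
      IsEarExtension n N i' ∧ Fintype.card V < Fintype.card X := by
  classical
  obtain ⟨-, E, hE⟩ := h
  simp only [IsSaturated, not_forall] at hφ
  obtain ⟨s, t, e, he, ⟨x, hx, hxφ⟩, hpaths⟩ := hφ
  have hG := E.preconnected (hE ▸ preconnected_induce_range i hA)
  have hlen : e.length < n := he.length_lt hn hH (preconnected_induce_range φ hG)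
  obtain ⟨j, hj⟩ := not_forall.1 fun h ↦ hpaths (E.hasDisjointPaths (l := ⟨_, hlen⟩) h)
  let X : Set W := Set.range φ ∪ {x | x ∈ e.support}
  have hφX (v : V) : φ v ∈ X := .inl ⟨v, rfl⟩
  have heX : ∀ x ∈ e.support, x ∈ X := fun _ ↦ .inr
  let ψ := codRestrictInduce φ X hφX
  have hψ : Set.range ψ = (↑) ⁻¹' Set.range φ := range_codRestrictInduce φ X hφX
  let e' : (H.induce X).Walk (ψ s) (ψ t) := e.induce X heX
  have he' : IsEar (Set.range ψ) e' := hψ ▸ he.induce heX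
  have hcover (y : X) : y ∈ Set.range ψ ∨ y ∈ e'.support :=
    y.2.imp (fun hy ↦ hψ ▸ hy) fun hy ↦ (Walk.support_induce e heX ▸ List.mem_attachWith ..).2 hy
  have hl : e'.length = (⟨_, hlen⟩ : Fin n) := length_induce e heX
  let _ : Fintype X := ((Set.finite_range φ).union e.support.finite_toSet).fintype
  refine ⟨X, inferInstance, ψ.comp i, ⟨hH.comap (Embedding.induce X), E.addEar he' hcover hl hj,
    (base_addEar he' hcover hl hj).trans ?_⟩, ?_⟩
  · rw [hE, ← Set.range_comp]
    rfl
  · refine Fintype.card_lt_of_injective_of_notMem ψ ψ.injective (b := ⟨x, heX x hx⟩) ?_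
    rwa [hψ]

end EarExtensions

theorem LongCycleFree.exists_isSaturated {α : Type} [Finite α] {A : SimpleGraph α} {n : ℕ}
    (hA : LongCycleFree n A) (hn : 2 ≤ n) (hA_conn : A.Preconnected) (N : ℕ) :
    ∃ (β : Type) (_ : Fintype β) (A' : SimpleGraph β) (_ : A ↪g A'), LongCycleFree n A' ∧
      ∀ (γ : Type) (C : SimpleGraph γ) (g : A' ↪g C), LongCycleFree n C → IsSaturated g N := by
  have := Fintype.ofFinite α
  let sizes : Set ℕ := {k | ∃ (β : Type) (_ : Fintype β) (G : SimpleGraph β) (i : A ↪g G),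
    IsEarExtension n N i ∧ Fintype.card β = k}
  have hne : sizes.Nonempty := ⟨_, α, ‹_›, A, Embedding.refl, isEarExtension_refl N hA, rfl⟩
  have hbdd : BddAbove sizes :=
    ⟨_, fun _ ⟨_, _, _, _, hi, hcard⟩ ↦ hcard ▸ hi.card_le hn hA_conn⟩
  obtain ⟨β, _, A', i, hi, hcard⟩ := Nat.sSup_mem hne hbdd
  refine ⟨β, ‹_›, A', i, hi.1, fun γ C g hC ↦ by_contra fun hg ↦ ?_⟩
  obtain ⟨X, _, i', hi', hlt⟩ := hi.exists_card_lt hn hA_conn hC hg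
  exact (le_csSup hbdd ⟨X, ‹_›, _, i', hi', rfl⟩).not_gt (hcard ▸ hlt)

section ComponentApex

variable {V : Type*} {G : SimpleGraph V} {n : ℕ}

/-- `G` together with a new vertex `none` joined to one chosen vertex of each connected component;
unlike a cone, this connects `G` without creating any cycle. -/
def componentApex (G : SimpleGraph V) : SimpleGraph (Option V) :=
  G.map Function.Embedding.some ⊔
    fromRel fun x y ↦ x = none ∧ ∃ c : G.ConnectedComponent, y = some c.nonempty_supp.some

theorem componentApex_adj_none_iff {x : Option V} :
    (componentApex G).Adj none x ↔ ∃ c : G.ConnectedComponent, x = some c.nonempty_supp.some := by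
  simp only [componentApex, sup_adj, map_adj, fromRel_adj]
  aesop

/-- The embedding of `G` into `componentApex G`. -/
def componentApexEmbedding (G : SimpleGraph V) : G ↪g componentApex G where
  toEmbedding := .some
  map_rel_iff' := (or_iff_left (by simp)).trans (map_adj_apply (f := .some))

theorem range_componentApexEmbedding :
    Set.range (componentApexEmbedding G) = {none}ᶜ :=
  Set.ext fun _ ↦ Option.ne_none_iff_exists.symm

theorem componentApex_preconnected : (componentApex G).Preconnected := by
  have reachable_none (x : Option V) : (componentApex G).Reachable x none := by
    obtain _ | v := x
    · rfl
    · have hv : G.Reachable v (G.connectedComponentMk v).out :=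
        (ConnectedComponent.exact (Quot.out_eq _)).symm
      exact (hv.map (componentApexEmbedding G).toHom).trans
        (componentApex_adj_none_iff.2 ⟨_, rfl⟩).symm.reachable
  exact fun x y ↦ (reachable_none x).trans (reachable_none y).symm

theorem not_isCycle_componentApex (w : (componentApex G).Walk none none) : ¬ w.IsCycle := by
  intro hw
  obtain ⟨x, h, p, rfl⟩ := w.not_nil_iff.1 hw.not_nil
  obtain ⟨hp, hedge⟩ := (Walk.cons_isCycle_iff p h).1 hw
  obtain ⟨y, h', q, hq⟩ := Walk.exists_eq_cons_of_ne h.ne p.reverse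
  obtain ⟨hqp, hnone⟩ := (Walk.cons_isPath_iff h' q).1 (hq ▸ hp.reverse)
  obtain ⟨c, rfl⟩ := componentApex_adj_none_iff.1 h
  obtain ⟨d, rfl⟩ := componentApex_adj_none_iff.1 h'
  obtain ⟨r, -⟩ := exists_walk_map_eq (componentApexEmbedding G)
    (a := d.nonempty_supp.some) (b := c.nonempty_supp.some) q
    fun z hz ↦ range_componentApexEmbedding ▸ fun h ↦ hnone (h ▸ hz)
  obtain rfl : d = c := d.nonempty_supp.some_mem.symm.trans
    ((ConnectedComponent.sound r.reachable).trans c.nonempty_supp.some_mem)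
  refine hedge ?_
  rw [← List.mem_reverse, ← Walk.edges_reverse, hq]
  exact List.mem_cons_self

theorem LongCycleFree.componentApex (hG : LongCycleFree n G) :
    LongCycleFree n (componentApex G) := by
  classical
  intro u w hw
  refine hG.length_lt_of_support_subset_range (componentApexEmbedding G) hw fun x hx ↦ ?_
  rw [range_componentApexEmbedding]
  rintro rfl
  exact not_isCycle_componentApex _ (hw.rotate hx)

end ComponentApex

/-- For `n ≥ 3`, the class of all finite graphs containing no cycle of length at least `n`
has the weak amalgamation property. -/
theorem longCycleFree_wap (n : ℕ) (hn : 3 ≤ n) :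
    GraphWAP (fun _ G => ∀ m : ℕ, n ≤ m → ¬ Contains (SimpleGraph.cycleGraph m) G) := by
  intro α _ A hA
  simp only [← longCycleFree_iff_not_contains hn] at hA ⊢
  obtain ⟨β, _, A', i, hA', hsat⟩ :=
    hA.componentApex.exists_isSaturated (by lia) componentApex_preconnected (n * n + 2)
  refine ⟨β, inferInstance, A', i.comp (componentApexEmbedding A), hA',
    fun γ _ B hB δ _ C hC f g ↦ ?_⟩
  classical
  exact ⟨_, inferInstance, freeAmalgam f g, hB.freeAmalgam hC (hsat δ C g hC),
    freeAmalgamLeft f g, freeAmalgamRight f g, fun a ↦ (freeAmalgamRight_comp f g _).symm⟩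
end
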